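/- arXiv:2603.00752 — 2 statements merged into one kernel-verified Lean document; each statement's English description precedes it below -/
import Mathlib

section
/- Fix n ≥ 6. Let G = A_{n−1} be the anticycle on [n−1] and let F be the star on [n] with edges {i, n} for 1 ≤ i ≤ n−3. Then the product ideal I_G^2 · I_F has linear quotients via the ordering of its minimal monomial generators given by decreasing lexicographic order induced by x_n > x_{n−1} > … > x_1. -/
open MvPolynomial

noncomputable section

/-- The edge ideal of a finite simple graph on vertex set `Fin n`
(vertex with index `v` corresponds to the vertex `v+1` of `[n]`). -/
def edgeIdeal (K : Type*) [Field K] {n : ℕ} (G : SimpleGraph (Fin n)) :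
    Ideal (MvPolynomial (Fin n) K) :=
  Ideal.span {p | ∃ i j : Fin n, G.Adj i j ∧ p = X i * X j}

/-- `d` is the exponent vector of a minimal monomial generator of `I`. -/
def IsMinGen {K : Type*} [Field K] {n : ℕ} (I : Ideal (MvPolynomial (Fin n) K))
    (d : Fin n →₀ ℕ) : Prop :=
  monomial d (1 : K) ∈ I ∧
    ∀ e : Fin n →₀ ℕ, e ≤ d → e ≠ d → monomial e (1 : K) ∉ I

/-- A list of exponent vectors `L = [d_1, …, d_r]` is a linear quotient ordering if
for every `i ≥ 2` the colon ideal `(x^{d_1}, …, x^{d_{i-1}}) : x^{d_i}` is generated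
by a subset of the variables. -/
def IsLinQuotOrder (K : Type*) [Field K] {n : ℕ} (L : List (Fin n →₀ ℕ)) : Prop :=
  ∀ i : Fin L.length, 0 < i.val →
    ∃ V : Set (Fin n),
      Submodule.colon
        (Ideal.span {m : MvPolynomial (Fin n) K |
          ∃ k : Fin L.length, k.val < i.val ∧ m = monomial (L.get k) 1})
        (Ideal.span {monomial (L.get i) (1 : K)}) =
      Ideal.span ((fun v : Fin n => (X v : MvPolynomial (Fin n) K)) '' V)

/-- A monomial ideal has linear quotients if it is principal or admits a
linear quotient ordering of its minimal monomial generators. -/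
def HasLinearQuotients {K : Type*} [Field K] {n : ℕ}
    (I : Ideal (MvPolynomial (Fin n) K)) : Prop :=
  (∃ p, I = Ideal.span {p}) ∨
    ∃ L : List (Fin n →₀ ℕ), L.Nodup ∧ (∀ d, d ∈ L ↔ IsMinGen I d) ∧ IsLinQuotOrder K L

/-- `lexLt d e` : the monomial `x^d` is lexicographically smaller than `x^e`
for the lexicographic order induced by `x_n > x_{n-1} > … > x_1`. -/
def lexLt {n : ℕ} (d e : Fin n →₀ ℕ) : Prop :=
  ∃ k : Fin n, d k < e k ∧ ∀ m : Fin n, k < m → d m = e m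

/-- `L` lists the minimal monomial generators of `I` in decreasing lexicographic order. -/
def LexDecMinGenOrder {K : Type*} [Field K] {n : ℕ} (I : Ideal (MvPolynomial (Fin n) K))
    (L : List (Fin n →₀ ℕ)) : Prop :=
  List.Pairwise (fun d e => lexLt e d) L ∧ ∀ d, d ∈ L ↔ IsMinGen I d

/-- The anticycle on `[m]` : `{i,j}` is an edge iff `i ≠ j` and `i - j ≢ ±1 (mod m)`. -/
def anticycle (m : ℕ) : SimpleGraph (Fin m) where
  Adj i j := i ≠ j ∧ (i.val + 1) % m ≠ j.val ∧ (j.val + 1) % m ≠ i.val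
  symm := ⟨fun i j h => ⟨h.1.symm, h.2.2, h.2.1⟩⟩
  loopless := ⟨fun i h => h.1 rfl⟩

/-- The anticycle on `[m]` regarded as a graph on the vertex set `[n]`. -/
def anticycleIn (n m : ℕ) : SimpleGraph (Fin n) where
  Adj i j := i ≠ j ∧ i.val < m ∧ j.val < m ∧ (i.val + 1) % m ≠ j.val ∧ (j.val + 1) % m ≠ i.val
  symm := ⟨fun i j h => ⟨h.1.symm, h.2.2.1, h.2.1, h.2.2.2.2, h.2.2.2.1⟩⟩
  loopless := ⟨fun i h => h.1 rfl⟩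

/-- The star on `[n]` with edges `{i, n}` for `1 ≤ i ≤ n - 3`
(in the `0`-indexed picture: edges `{i, n-1}` for `i ≤ n - 4`). -/
def starF (n : ℕ) : SimpleGraph (Fin n) :=
  SimpleGraph.fromRel (fun i j => i.val + 4 ≤ n ∧ j.val = n - 1)

/-- `AgreeOrder n s i j t` : the degree-`s` monomials with ascending (0-indexed)
index sequences `i` and `j` agree in order `t`. -/
def AgreeOrder (n s : ℕ) (i j : ℕ → Fin n) (t : ℕ) : Prop :=
  if t = 0 then j (s - 1) < i (s - 1)
  else (∀ l, s - t ≤ l → l ≤ s - 1 → i l = j l) ∧ i (s - t - 1) ≠ j (s - t - 1)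

/-!
Number the vertices from `0` and write `t = n - 1` for the centre of the star. The generators of
`I_G ^ s * I_F` have degree `2 * s + 2`, and their exponents `d` are cut out by linear inequalities:
`d t = 1`, two consecutive vertices of the cycle carry at most `s + 1` units in total, and the two
cycle vertices off the star carry at most `s`. Conversely, if `d` satisfies these inequalities and
`v 0 ≤ … ≤ v (2 * s)` are its factors other than `t`, then pairing `v i` with `v (i + s + 1)` and
`v s` with `t` only uses edges, unless some pair is `{0, n - 2}`; in that case pair `v i` with
`v (i + s)` for `1 ≤ i ≤ s`, and `v 0` with `t`.

For linear quotients it is enough, whenever `x^v` is lexicographically smaller than `x^u`, to trade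
one variable of `x^v` for a larger one that is more frequent in `x^u`. The natural candidate is the
largest variable whose exponents differ: every inequality obstructing the trade involves a smaller
vertex, and giving up a unit at that vertex removes the obstruction. The exception is that the
inequalities at `{0, n - 2}` and `{n - 3, n - 2}` are both tight, and then the degree leaves room to
raise another variable instead.
-/

section MonomialIdeals

variable {R σ : Type*} [CommSemiring R]

variable (R) in
/-- The monomial ideal generated by the monomials `x^a` with exponent vector `a ∈ A`. -/
def monomialIdeal (A : Set (σ →₀ ℕ)) : Ideal (MvPolynomial σ R) :=
  Ideal.span ((fun a => monomial a 1) '' A)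

theorem monomial_mem_monomialIdeal_iff [Nontrivial R] {A : Set (σ →₀ ℕ)} {d : σ →₀ ℕ} :
    monomial d (1 : R) ∈ monomialIdeal R A ↔ ∃ a ∈ A, a ≤ d := by
  classical
  simp [monomialIdeal, mem_ideal_span_monomial_image, support_monomial]

theorem mem_monomialIdeal_colon_monomial_iff {A : Set (σ →₀ ℕ)} {d : σ →₀ ℕ}
    {f : MvPolynomial σ R} :
    f ∈ (monomialIdeal R A).colon (Ideal.span {monomial d (1 : R)}) ↔
      ∀ t ∈ f.support, ∃ a ∈ A, a ≤ t + d := by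
  rw [Ideal.mem_colon_span_singleton, monomialIdeal, mem_ideal_span_monomial_image]
  constructor
  · intro h t ht
    apply h
    rwa [mem_support_iff, coeff_mul_monomial, mul_one, ← mem_support_iff]
  · intro h t ht
    rw [mem_support_iff, coeff_mul_monomial', ite_ne_right_iff, mul_one] at ht
    simpa [tsub_add_cancel_of_le ht.1] using h _ (mem_support_iff.mpr ht.2)

theorem monomialIdeal_colon_monomial_eq_span_X {A : Set (σ →₀ ℕ)} {d : σ →₀ ℕ}
    (hA : ∀ a ∈ A, ∃ b ∈ A, ∃ p, b ≤ d + Finsupp.single p 1 ∧ d p < a p) :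
    (monomialIdeal R A).colon (Ideal.span {monomial d (1 : R)}) =
      Ideal.span (X '' {p | ∃ b ∈ A, b ≤ d + Finsupp.single p 1}) := by
  ext f
  rw [mem_monomialIdeal_colon_monomial_iff, mem_ideal_span_X_image]
  refine forall₂_congr fun t _ => ⟨?_, ?_⟩
  · rintro ⟨a, ha, hat⟩
    obtain ⟨b, hb, p, hbd, hp⟩ := hA a ha
    have hatp : a p ≤ t p + d p := hat p
    exact ⟨p, ⟨b, hb, hbd⟩, by omega⟩
  · rintro ⟨p, ⟨b, hb, hbd⟩, hp⟩
    refine ⟨b, hb, hbd.trans ?_⟩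
    rw [add_comm t]
    gcongr
    rwa [Finsupp.single_le_iff, Nat.one_le_iff_ne_zero]

/-- The exponent vectors of products of `s` monomials with exponents in `A` and one monomial with
exponent in `B`. -/
def powMulExponents (A B : Set (σ →₀ ℕ)) (s : ℕ) : Set (σ →₀ ℕ) :=
  {d | ∃ f : Fin s → σ →₀ ℕ, (∀ i, f i ∈ A) ∧ ∃ b ∈ B, d = ∑ i, f i + b}

theorem monomialIdeal_pow_mul (A B : Set (σ →₀ ℕ)) (s : ℕ) :
    monomialIdeal R A ^ s * monomialIdeal R B = monomialIdeal R (powMulExponents A B s) := by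
  simp only [monomialIdeal, Ideal.span]
  rw [Submodule.span_pow, Submodule.span_mul_span]
  congr 1
  ext m
  simp only [Set.mem_mul, Set.mem_pow, List.prod_ofFn]
  constructor
  · rintro ⟨_, ⟨f, rfl⟩, _, ⟨b, hb, rfl⟩, rfl⟩
    choose a ha haf using fun i => (f i).2
    refine ⟨∑ i, a i + b, ⟨a, ha, b, hb, rfl⟩, ?_⟩
    simp [← haf, ← monomial_sum_one, monomial_mul]
  · rintro ⟨_, ⟨a, ha, b, hb, rfl⟩, rfl⟩
    refine ⟨_, ⟨fun i => ⟨_, a i, ha i, rfl⟩, rfl⟩, _, ⟨b, hb, rfl⟩, ?_⟩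
    simp [← monomial_sum_one, monomial_mul]

end MonomialIdeals

section ExponentVectors

variable {σ : Type*}

theorem eq_of_le_of_degree_eq {d e : σ →₀ ℕ} (hle : d ≤ e) (hdeg : d.degree = e.degree) :
    d = e := by
  obtain ⟨r, rfl⟩ := exists_add_of_le hle
  rw [map_add, left_eq_add, Finsupp.degree_eq_zero_iff] at hdeg
  rw [hdeg, add_zero]

theorem isAntichain_of_forall_degree_eq {A : Set (σ →₀ ℕ)} {D : ℕ}
    (hA : ∀ a ∈ A, a.degree = D) : IsAntichain (· ≤ ·) A :=
  fun a ha b hb hne hle => hne (eq_of_le_of_degree_eq hle ((hA a ha).trans (hA b hb).symm))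

theorem exists_monotone_sum_single_eq [LinearOrder σ] {d : σ →₀ ℕ} {m : ℕ} (hd : d.degree = m) :
    ∃ v : Fin m → σ, Monotone v ∧ ∑ i, Finsupp.single (v i) 1 = d := by
  set l := d.toMultiset.sort (· ≤ ·)
  have hsum : ∑ i, Finsupp.single (l.get i) 1 = d := by
    apply Finsupp.orderIsoMultiset.injective
    change Finsupp.toMultiset _ = Finsupp.toMultiset d
    simp only [map_sum, Finsupp.toMultiset_single, one_smul, List.get_eq_getElem]
    rw [Fin.sum_univ_fun_getElem l fun a => ({a} : Multiset σ), ← Multiset.sum_coe,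
      ← Multiset.map_coe, Multiset.sum_map_singleton, Multiset.sort_eq]
  obtain rfl : l.length = m := by
    rw [← hd, ← hsum]
    simp
  exact ⟨l.get, (Multiset.pairwise_sort _ _).sortedLE, hsum⟩

theorem sum_apply_add_sum_apply_le {s : ℕ} {f : Fin s → σ →₀ ℕ} {a b : σ}
    (hf : ∀ i, f i a + f i b ≤ 1) : (∑ i, f i) a + (∑ i, f i) b ≤ s := by
  simp only [Finsupp.finsetSum_apply, ← Finset.sum_add_distrib]
  simpa using Finset.sum_le_card_nsmul Finset.univ _ 1 fun i _ => hf i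

theorem card_le_sum_single_apply_add {m : ℕ} {v : Fin m → σ} {a b : σ}
    {I : Finset (Fin m)} (hI : ∀ i ∈ I, v i = a ∨ v i = b) :
    I.card ≤ (∑ i, Finsupp.single (v i) 1 : σ →₀ ℕ) a +
      (∑ i, Finsupp.single (v i) 1 : σ →₀ ℕ) b := by
  classical
  simp only [Finsupp.finsetSum_apply, ← Finset.sum_add_distrib]
  calc I.card = ∑ i ∈ I, 1 := by simp
    _ ≤ ∑ i ∈ I, (Finsupp.single (v i) 1 a + Finsupp.single (v i) 1 b) := by
        refine Finset.sum_le_sum fun i hi => ?_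
        rcases hI i hi with h | h <;> simp [h]
    _ ≤ _ := Finset.sum_le_sum_of_subset (Finset.subset_univ _)

theorem degree_eq_sum_of_support_subset {d : σ →₀ ℕ} {T : Finset σ} (hT : d.support ⊆ T) :
    d.degree = ∑ i ∈ T, d i :=
  Finset.sum_subset hT fun _ _ hi => Finsupp.notMem_support_iff.mp hi

theorem sum_apply_le_degree (d : σ →₀ ℕ) (S : Finset σ) : ∑ i ∈ S, d i ≤ d.degree := by
  classical
  rw [degree_eq_sum_of_support_subset (Finset.subset_union_left (s₂ := S))]
  exact Finset.sum_le_sum_of_subset Finset.subset_union_right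

theorem exists_notMem_lt_of_sum_lt {u v : σ →₀ ℕ} (hdeg : v.degree ≤ u.degree) {S : Finset σ}
    (hS : ∑ i ∈ S, u i < ∑ i ∈ S, v i) : ∃ p ∉ S, v p < u p := by
  classical
  by_contra! h
  refine hdeg.not_gt ?_
  set T := S ∪ (u.support ∪ v.support)
  have hsdiff : ∑ i ∈ T \ S, u i ≤ ∑ i ∈ T \ S, v i :=
    Finset.sum_le_sum fun i hi => h i (Finset.mem_sdiff.mp hi).2
  rw [degree_eq_sum_of_support_subset (d := u) (T := T) (by grind),
    degree_eq_sum_of_support_subset (d := v) (T := T) (by grind),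
    ← Finset.sum_sdiff (Finset.subset_union_left : S ⊆ T),
    ← Finset.sum_sdiff (Finset.subset_union_left : S ⊆ T)]
  exact add_lt_add_of_le_of_lt hsdiff hS

theorem exists_lt_pos_of_degree_le [LinearOrder σ] {u v : σ →₀ ℕ} {k : σ}
    (hdeg : u.degree ≤ v.degree) (hk : v k < u k) (heq : ∀ m, k < m → v m = u m) :
    ∃ j < k, 0 < v j := by
  by_contra! hv
  have hle : v ≤ u := fun i => by
    rcases lt_trichotomy i k with h | rfl | h
    · exact (hv i h).trans (Nat.zero_le _)
    · exact hk.le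
    · exact (heq i h).le
  obtain rfl : v = u := eq_of_le_of_degree_eq hle ((Finsupp.degree_mono hle).antisymm hdeg)
  exact hk.false

/-- The exponent vector of `x_p x^v / x_j`, provided that `x_j` divides `x^v`. -/
def moveUnit (v : σ →₀ ℕ) (j p : σ) : σ →₀ ℕ :=
  v - Finsupp.single j 1 + Finsupp.single p 1

theorem moveUnit_apply [DecidableEq σ] (v : σ →₀ ℕ) (j p a : σ) :
    moveUnit v j p a = v a - (if a = j then 1 else 0) + (if a = p then 1 else 0) := by
  simp [moveUnit, Finsupp.single_apply, eq_comm]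

theorem moveUnit_le (v : σ →₀ ℕ) (j p : σ) : moveUnit v j p ≤ v + Finsupp.single p 1 := by
  unfold moveUnit
  gcongr
  exact tsub_le_self

theorem degree_moveUnit {v : σ →₀ ℕ} {j : σ} (hj : 0 < v j) (p : σ) :
    (moveUnit v j p).degree = v.degree := by
  obtain ⟨t, rfl⟩ := exists_add_of_le (Finsupp.single_le_iff.mpr (Nat.one_le_of_lt hj))
  simp [moveUnit, add_comm]

end ExponentVectors

section Lex

variable {n : ℕ}

theorem lexLt_iff_toColex_lt {d e : Fin n →₀ ℕ} : lexLt d e ↔ toColex d < toColex e :=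
  exists_congr fun _ => and_comm

theorem exists_pairwise_lexLt_list {A : Set (Fin n →₀ ℕ)} (hA : A.Finite) :
    ∃ L : List (Fin n →₀ ℕ), L.Pairwise (fun d e => lexLt e d) ∧ ∀ d, d ∈ L ↔ d ∈ A := by
  classical
  refine ⟨((hA.toFinset.map toColex.toEmbedding).sort (· ≥ ·)).map ofColex, ?_, by simp⟩
  rw [List.pairwise_map]
  exact (Finset.sortedGT_sort _).pairwise.imp lexLt_iff_toColex_lt.mpr

theorem lexLt_moveUnit (v : Fin n →₀ ℕ) {j p : Fin n} (hjp : j < p) :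
    lexLt v (moveUnit v j p) := by
  refine ⟨p, by simp [moveUnit_apply, hjp.ne'], fun m hm => ?_⟩
  simp [moveUnit_apply, hm.ne', (hjp.trans hm).ne']

/-- The exchange property behind lexicographic linear quotients: if `x^v` is lexicographically
smaller than `x^u`, one variable of `x^v` can be traded for a larger one occurring more often in
`x^u`, without leaving `A`. -/
def LexExchange (A : Set (Fin n →₀ ℕ)) : Prop :=
  ∀ u ∈ A, ∀ v ∈ A, lexLt v u → ∃ j p, j < p ∧ v p < u p ∧ moveUnit v j p ∈ A

theorem LexExchange.isLinQuotOrder (K : Type*) [Field K] {A : Set (Fin n →₀ ℕ)}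
    (hA : LexExchange A) {L : List (Fin n →₀ ℕ)} (hL : L.Pairwise (fun d e => lexLt e d))
    (hmem : ∀ d, d ∈ L ↔ d ∈ A) : IsLinQuotOrder K L := by
  have hanti : StrictAnti fun i => toColex (L.get i) := fun i k hik =>
    lexLt_iff_toColex_lt.mp (List.pairwise_iff_get.mp hL i k hik)
  intro i _
  have hspan : Ideal.span {m : MvPolynomial (Fin n) K |
      ∃ k : Fin L.length, k.val < i.val ∧ m = monomial (L.get k) 1} =
      monomialIdeal K (L.get '' Set.Iio i) := by
    rw [monomialIdeal, Set.image_image]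
    congr 1
    ext m
    simp [eq_comm]
  rw [hspan]
  refine ⟨_, monomialIdeal_colon_monomial_eq_span_X ?_⟩
  rintro _ ⟨k, hk, rfl⟩
  obtain ⟨j, p, hjp, hp, hw⟩ := hA _ ((hmem _).mp (L.get_mem k)) _ ((hmem _).mp (L.get_mem i))
    (lexLt_iff_toColex_lt.mpr (hanti hk))
  obtain ⟨l, hl⟩ := List.mem_iff_get.mp ((hmem _).mpr hw)
  have hli : l < i := hanti.lt_iff_gt.mp <| by
    simpa only [hl] using lexLt_iff_toColex_lt.mp (lexLt_moveUnit (L.get i) hjp)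
  exact ⟨_, ⟨l, hli, hl⟩, p, moveUnit_le _ _ _, hp⟩

theorem isMinGen_monomialIdeal_iff {K : Type*} [Field K] {A : Set (Fin n →₀ ℕ)}
    (hA : IsAntichain (· ≤ ·) A) {d : Fin n →₀ ℕ} : IsMinGen (monomialIdeal K A) d ↔ d ∈ A := by
  simp only [IsMinGen, monomial_mem_monomialIdeal_iff]
  constructor
  · rintro ⟨⟨a, ha, had⟩, hmin⟩
    by_contra hd
    exact hmin a had (fun h => hd (h ▸ ha)) ⟨a, ha, le_rfl⟩
  · refine fun hd => ⟨⟨d, hd, le_rfl⟩, ?_⟩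
    rintro e hed hne ⟨a, ha, hae⟩
    obtain rfl := hA.eq ha hd (hae.trans hed)
    exact hne (le_antisymm hed hae)

theorem LexExchange.exists_lexDecMinGenOrder (K : Type*) [Field K] {A : Set (Fin n →₀ ℕ)} {D : ℕ}
    (hA : LexExchange A) (hdeg : ∀ a ∈ A, a.degree = D) :
    ∃ L, LexDecMinGenOrder (monomialIdeal K A) L ∧ IsLinQuotOrder K L := by
  have hfin : A.Finite := (Finsupp.finite_of_degree_eq D).subset hdeg
  obtain ⟨L, hL, hmem⟩ := exists_pairwise_lexLt_list hfin
  have hanti : IsAntichain (· ≤ ·) A := isAntichain_of_forall_degree_eq hdeg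
  exact ⟨L, ⟨hL, fun d => (hmem d).trans (isMinGen_monomialIdeal_iff hanti).symm⟩,
    hA.isLinQuotOrder K hL hmem⟩

end Lex

section EdgeExponents

variable {n : ℕ} {G : SimpleGraph (Fin n)} {e : Fin n →₀ ℕ} {a b : Fin n}

/-- The exponent vectors of the generators `x_i x_j` of the edge ideal of `G`. -/
def edgeExponents (G : SimpleGraph (Fin n)) : Set (Fin n →₀ ℕ) :=
  {e | ∃ i j, G.Adj i j ∧ e = Finsupp.single i 1 + Finsupp.single j 1}

theorem edgeIdeal_eq_monomialIdeal (K : Type*) [Field K] (G : SimpleGraph (Fin n)) :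
    edgeIdeal K G = monomialIdeal K (edgeExponents G) := by
  rw [edgeIdeal, monomialIdeal]
  congr 1
  ext p
  constructor
  · rintro ⟨i, j, hij, rfl⟩
    exact ⟨_, ⟨i, j, hij, rfl⟩, by simp [X, monomial_mul]⟩
  · rintro ⟨_, ⟨i, j, hij, rfl⟩, rfl⟩
    exact ⟨i, j, hij, by simp [X, monomial_mul]⟩

theorem degree_of_mem_edgeExponents (he : e ∈ edgeExponents G) : e.degree = 2 := by
  obtain ⟨i, j, -, rfl⟩ := he
  simp

theorem apply_add_apply_le_one_of_not_adj (he : e ∈ edgeExponents G) (hne : a ≠ b)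
    (hab : ¬ G.Adj a b) : e a + e b ≤ 1 := by
  obtain ⟨i, j, hij, rfl⟩ := he
  have hab' : ¬ G.Adj b a := fun h => hab h.symm
  simp only [Finsupp.add_apply, Finsupp.single_apply]
  grind [hij.ne]

theorem apply_eq_zero_of_forall_not_adj (he : e ∈ edgeExponents G) (ha : ∀ b, ¬ G.Adj a b) :
    e a = 0 := by
  obtain ⟨i, j, hij, rfl⟩ := he
  have hi : i ≠ a := by rintro rfl; exact ha _ hij
  have hj : j ≠ a := by rintro rfl; exact ha _ hij.symm
  simp [hi.symm, hj.symm]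

theorem mem_edgeExponents_starF :
    e ∈ edgeExponents (starF n) ↔ ∃ p t : Fin n, p.val + 4 ≤ n ∧ t.val + 1 = n ∧
      e = Finsupp.single p 1 + Finsupp.single t 1 := by
  constructor
  · rintro ⟨i, j, hij, rfl⟩
    rw [starF, SimpleGraph.fromRel_adj] at hij
    rcases hij.2 with ⟨hi, hj⟩ | ⟨hj, hi⟩
    · exact ⟨i, j, hi, by omega, rfl⟩
    · exact ⟨j, i, hj, by omega, add_comm _ _⟩
  · rintro ⟨p, t, hp, ht, rfl⟩
    refine ⟨p, t, ?_, rfl⟩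
    rw [starF, SimpleGraph.fromRel_adj]
    exact ⟨by rintro rfl; omega, .inl ⟨hp, by omega⟩⟩

/-- Adjacency on the cycle formed by the first `n - 1` vertices, with the residues mod `n - 1`
spelled out. -/
def CycleNeighbors (a b : Fin n) : Prop :=
  a.val + 1 = b.val ∧ b.val + 1 < n ∨ b.val + 1 = a.val ∧ a.val + 1 < n ∨
    a.val = 0 ∧ b.val + 2 = n ∨ b.val = 0 ∧ a.val + 2 = n

theorem anticycleIn_adj_iff :
    (anticycleIn n (n - 1)).Adj a b ↔
      a ≠ b ∧ a.val + 1 < n ∧ b.val + 1 < n ∧ ¬ CycleNeighbors a b := by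
  have succ_mod_ne_iff {i j : Fin n} (hi : i.val + 1 < n) (hj : j.val + 1 < n) :
      (i.val + 1) % (n - 1) ≠ j.val ↔ i.val + 1 ≠ j.val ∧ ¬ (j.val = 0 ∧ i.val + 2 = n) := by
    rcases (show i.val + 1 ≤ n - 1 by omega).eq_or_lt with h | h
    · rw [h, Nat.mod_self]
      omega
    · rw [Nat.mod_eq_of_lt h]
      omega
  have hlt {i : Fin n} : i.val < n - 1 ↔ i.val + 1 < n := by omega
  simp only [anticycleIn, hlt, CycleNeighbors]
  refine and_congr_right fun _ => and_congr_right fun ha => and_congr_right fun hb => ?_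
  rw [succ_mod_ne_iff ha hb, succ_mod_ne_iff hb ha]
  omega

theorem anticycleIn_adj_of_add_two_le (hab : a.val + 2 ≤ b.val)
    (hb : b.val + 2 ≤ n) (hwrap : ¬ (a.val = 0 ∧ b.val + 2 = n)) :
    (anticycleIn n (n - 1)).Adj a b := by
  rw [anticycleIn_adj_iff]
  unfold CycleNeighbors
  omega

theorem CycleNeighbors.symm (hab : CycleNeighbors a b) : CycleNeighbors b a := by
  unfold CycleNeighbors at *
  omega

theorem CycleNeighbors.ne (hn : 3 ≤ n) (hab : CycleNeighbors a b) : a ≠ b := by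
  rintro rfl
  unfold CycleNeighbors at hab
  omega

theorem CycleNeighbors.not_adj_anticycleIn (hab : CycleNeighbors a b) :
    ¬ (anticycleIn n (n - 1)).Adj a b :=
  fun h => (anticycleIn_adj_iff.mp h).2.2.2 hab

theorem CycleNeighbors.not_adj_starF (hab : CycleNeighbors a b) : ¬ (starF n).Adj a b := by
  rw [starF, SimpleGraph.fromRel_adj]
  unfold CycleNeighbors at hab
  omega

end EdgeExponents

section GeneratorExponents

variable {n s : ℕ} {d : Fin n →₀ ℕ}

/-- The linear inequalities cutting out the exponents of the generators of `I_G ^ s * I_F`, for `G`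
the anticycle on the first `n - 1` vertices and `F` the star `starF n`. Vertices are `0`-indexed:
the centre of the star is `n - 1`, and `n - 3`, `n - 2` are the vertices not on the star. -/
structure IsGeneratorExponent (n s : ℕ) (d : Fin n →₀ ℕ) : Prop where
  degree_eq : d.degree = 2 * s + 2
  apply_last : ∀ t : Fin n, t.val + 1 = n → d t = 1
  add_le_of_cycleNeighbors : ∀ a b : Fin n, CycleNeighbors a b → d a + d b ≤ s + 1
  add_le_of_not_star : ∀ y x : Fin n, y.val + 3 = n → x.val + 2 = n → d y + d x ≤ s

theorem isGeneratorExponent_of_mem_powMulExponents (hn : 3 ≤ n)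
    (hd : d ∈ powMulExponents (edgeExponents (anticycleIn n (n - 1))) (edgeExponents (starF n)) s) :
    IsGeneratorExponent n s d := by
  obtain ⟨f, hf, e, he, rfl⟩ := hd
  have hsum {a b : Fin n} (hab : CycleNeighbors a b) : (∑ i, f i) a + (∑ i, f i) b ≤ s :=
    sum_apply_add_sum_apply_le fun i =>
      apply_add_apply_le_one_of_not_adj (hf i) (hab.ne hn) hab.not_adj_anticycleIn
  refine ⟨?_, fun t ht => ?_, fun a b hab => ?_, fun y x hy hx => ?_⟩
  · simp [fun i => degree_of_mem_edgeExponents (hf i), degree_of_mem_edgeExponents he, mul_comm]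
  · have hft (i) : f i t = 0 := apply_eq_zero_of_forall_not_adj (hf i) fun b => by
      rw [anticycleIn_adj_iff]
      omega
    obtain ⟨p, t', hp, ht', rfl⟩ := mem_edgeExponents_starF.mp he
    obtain rfl : t' = t := by omega
    have hpt : t' ≠ p := by omega
    simp [hft, hpt]
  · have hstar := apply_add_apply_le_one_of_not_adj he (hab.ne hn) hab.not_adj_starF
    have := hsum hab
    simp only [Finsupp.add_apply]
    omega
  · have hstar {a : Fin n} (ha : n ≤ a.val + 3) (ha' : a.val + 1 < n) : e a = 0 :=
      apply_eq_zero_of_forall_not_adj he fun b => by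
        rw [starF, SimpleGraph.fromRel_adj]
        omega
    have := hsum (a := y) (b := x) (.inl (by omega))
    simp only [Finsupp.add_apply, hstar hy.ge (by omega), hstar (a := x) (by omega) (by omega)]
    omega

end GeneratorExponents

section Factorization

variable {n s : ℕ} {v : Fin (s + 1 + s) → Fin n} {t : Fin n}

theorem IsGeneratorExponent.exists_monotone_factors {d : Fin n →₀ ℕ}
    (hd : IsGeneratorExponent n s d) (ht : t.val + 1 = n) :
    ∃ v : Fin (s + 1 + s) → Fin n, Monotone v ∧
      d = ∑ i, Finsupp.single (v i) 1 + Finsupp.single t 1 := by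
  obtain ⟨g, rfl⟩ := exists_add_of_le (Finsupp.single_le_iff.mpr (hd.apply_last t ht).ge)
  have hg : g.degree = s + 1 + s := by
    have := hd.degree_eq
    rw [map_add, Finsupp.degree_single] at this
    omega
  obtain ⟨v, hv, rfl⟩ := exists_monotone_sum_single_eq hg
  exact ⟨v, hv, add_comm _ _⟩

namespace IsGeneratorExponent

variable (hd : IsGeneratorExponent n s (∑ i, Finsupp.single (v i) 1 + Finsupp.single t 1))
  (hv : Monotone v)

include hd

theorem factor_add_two_le (ht : t.val + 1 = n) (i : Fin (s + 1 + s)) : (v i).val + 2 ≤ n := by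
  by_contra! hi
  have hcard : Finset.card {i} ≤ _ := card_le_sum_single_apply_add (v := v) (a := t) (b := t)
    (I := {i}) fun j hj => .inl (by rw [Finset.mem_singleton.mp hj]; omega)
  have hlast := hd.apply_last t ht
  simp only [Finsupp.add_apply, Finsupp.single_eq_same, Finset.card_singleton] at hcard hlast
  omega

theorem card_le_of_cycleNeighbors {a b : Fin n} (hab : CycleNeighbors a b)
    {I : Finset (Fin (s + 1 + s))} (hI : ∀ i ∈ I, v i = a ∨ v i = b) : I.card ≤ s + 1 := by
  have hcard := card_le_sum_single_apply_add hI
  have hle := hd.add_le_of_cycleNeighbors a b hab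
  simp only [Finsupp.add_apply] at hle
  omega

theorem card_le_of_not_star {y x : Fin n} (hy : y.val + 3 = n) (hx : x.val + 2 = n)
    {I : Finset (Fin (s + 1 + s))} (hI : ∀ i ∈ I, v i = y ∨ v i = x) : I.card ≤ s := by
  have hcard := card_le_sum_single_apply_add hI
  have hle := hd.add_le_of_not_star y x hy hx
  simp only [Finsupp.add_apply] at hle
  omega

include hv

theorem factor_add_four_le (hn : 3 ≤ n) (ht : t.val + 1 = n) {i : Fin (s + 1 + s)}
    (hi : i.val ≤ s) : (v i).val + 4 ≤ n := by
  by_contra! hlt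
  have hcard := hd.card_le_of_not_star (y := ⟨n - 3, by omega⟩) (x := ⟨n - 2, by omega⟩)
    (I := Finset.Ici i) (by grind) (by grind) fun k hk => by
      have : (v i).val ≤ (v k).val := hv (Finset.mem_Ici.mp hk)
      have := hd.factor_add_two_le ht k
      simp only [Fin.ext_iff]
      omega
  rw [Fin.card_Ici] at hcard
  omega

theorem factor_add_two_le_factor (hn : 3 ≤ n) (ht : t.val + 1 = n) {i j : Fin (s + 1 + s)}
    (hij : j.val = i.val + s + 1) : (v i).val + 2 ≤ (v j).val := by
  by_contra! hlt
  have hi : (v i).val + 4 ≤ n := hd.factor_add_four_le hv hn ht (by omega)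
  have hcard := hd.card_le_of_cycleNeighbors (a := v i) (b := ⟨(v i).val + 1, by omega⟩)
    (.inl (by grind)) (I := Finset.Icc i j) fun k hk => by
      have : (v i).val ≤ (v k).val := hv (Finset.mem_Icc.mp hk).1
      have : (v k).val ≤ (v j).val := hv (Finset.mem_Icc.mp hk).2
      simp only [Fin.ext_iff]
      omega
  rw [Fin.card_Icc] at hcard
  omega

theorem lt_of_factor_eq_zero_of_factor_eq (ht : t.val + 1 = n) {i j : Fin (s + 1 + s)}
    (hij : i < j) (hi : (v i).val = 0) (hj : (v j).val + 2 = n) : i.val + s < j.val := by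
  have hcard := hd.card_le_of_cycleNeighbors (a := v i) (b := v j) (.inr (.inr (.inl ⟨hi, hj⟩)))
    (I := Finset.Iic i ∪ Finset.Ici j) fun k hk => by
      simp only [Fin.ext_iff]
      rcases Finset.mem_union.mp hk with hk | hk
      · have : (v k).val ≤ (v i).val := hv (Finset.mem_Iic.mp hk)
        omega
      · have : (v j).val ≤ (v k).val := hv (Finset.mem_Ici.mp hk)
        have := hd.factor_add_two_le ht k
        omega
  rw [Finset.card_union_of_disjoint, Fin.card_Iic, Fin.card_Ici] at hcard
  · omega
  · rw [Finset.disjoint_left]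
    intro k hk hk'
    exact ((Finset.mem_Iic.mp hk).trans_lt hij).not_ge (Finset.mem_Ici.mp hk')

theorem factor_add_two_le_factor_of_wrap (hn : 3 ≤ n) (ht : t.val + 1 = n)
    {i j k l : Fin (s + 1 + s)} (hij : j.val = i.val + s + 1) (hi : (v i).val = 0)
    (hj : (v j).val + 2 = n) (hk₀ : 0 < k.val) (hk : k.val ≤ s)
    (hkl : l.val = k.val + s) : (v k).val + 2 ≤ (v l).val := by
  rcases le_or_gt k i with hki | hik
  · -- Otherwise the `k + s + 1` factors up to `v l` would all be `0` or `1`.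
    by_contra! hlt
    have hvk : (v k).val ≤ (v i).val := hv hki
    have hcard := hd.card_le_of_cycleNeighbors (a := v i) (b := ⟨1, by omega⟩)
      (.inl (by grind)) (I := Finset.Iic l) fun m hm => by
        have : (v m).val ≤ (v l).val := hv (Finset.mem_Iic.mp hm)
        simp only [Fin.ext_iff]
        omega
    rw [Fin.card_Iic] at hcard
    omega
  · have : (v j).val ≤ (v l).val := hv (by omega)
    have := hd.factor_add_four_le hv hn ht hk
    omega

end IsGeneratorExponent

variable {p q : Fin s → Fin n} {c : Fin n}

theorem sum_single_add_mem_powMulExponents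
    (hpq : ∀ i, (anticycleIn n (n - 1)).Adj (p i) (q i)) (hc : c.val + 4 ≤ n)
    (ht : t.val + 1 = n) :
    ∑ i, Finsupp.single (p i) 1 + Finsupp.single c 1 + ∑ i, Finsupp.single (q i) 1 +
      Finsupp.single t 1 ∈
      powMulExponents (edgeExponents (anticycleIn n (n - 1))) (edgeExponents (starF n)) s := by
  refine ⟨fun i => Finsupp.single (p i) 1 + Finsupp.single (q i) 1, fun i => ⟨_, _, hpq i, rfl⟩, _,
    mem_edgeExponents_starF.mpr ⟨c, t, hc, ht, rfl⟩, ?_⟩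
  rw [Finset.sum_add_distrib]
  abel

theorem IsGeneratorExponent.sum_single_mem_powMulExponents
    (hd : IsGeneratorExponent n s (∑ i, Finsupp.single (v i) 1 + Finsupp.single t 1))
    (hv : Monotone v) (hn : 3 ≤ n) (ht : t.val + 1 = n) :
    ∑ i, Finsupp.single (v i) 1 + Finsupp.single t 1 ∈
      powMulExponents (edgeExponents (anticycleIn n (n - 1))) (edgeExponents (starF n)) s := by
  by_cases hwrap : ∃ i j : Fin (s + 1 + s), j.val = i.val + s + 1 ∧ (v i).val = 0 ∧
      (v j).val + 2 = n
  · obtain ⟨i, j, hij, hi, hj⟩ := hwrap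
    rw [Fin.sum_univ_add, Fin.sum_univ_succ, add_comm (Finsupp.single _ 1)]
    refine sum_single_add_mem_powMulExponents (fun k => anticycleIn_adj_of_add_two_le ?_
      (hd.factor_add_two_le ht _) fun ⟨hk, hk'⟩ => ?_)
      (hd.factor_add_four_le hv hn ht (by simp)) ht
    · exact hd.factor_add_two_le_factor_of_wrap hv hn ht hij hi hj (by simp) (by simp) (by grind)
    · have := hd.lt_of_factor_eq_zero_of_factor_eq hv ht (by grind) hk hk'
      grind
  · rw [Fin.sum_univ_add, Fin.sum_univ_castSucc]
    refine sum_single_add_mem_powMulExponents (fun k => anticycleIn_adj_of_add_two_le ?_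
      (hd.factor_add_two_le ht _) fun ⟨hk, hk'⟩ => ?_) ?_ ht
    · exact hd.factor_add_two_le_factor hv hn ht (by grind)
    · exact hwrap ⟨_, _, by grind, hk, hk'⟩
    · exact hd.factor_add_four_le hv hn ht (by simp)

theorem powMulExponents_eq_setOf_isGeneratorExponent (hn : 3 ≤ n) (s : ℕ) :
    powMulExponents (edgeExponents (anticycleIn n (n - 1))) (edgeExponents (starF n)) s =
      {d | IsGeneratorExponent n s d} := by
  ext d
  refine ⟨isGeneratorExponent_of_mem_powMulExponents hn, fun hd => ?_⟩
  have ht : (⟨n - 1, by omega⟩ : Fin n).val + 1 = n := by grind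
  obtain ⟨v, hv, rfl⟩ := hd.exists_monotone_factors ht
  exact hd.sum_single_mem_powMulExponents hv hn ht

end Factorization

section Exchange

variable {n s : ℕ} {u v : Fin n →₀ ℕ} {j k p : Fin n}

namespace IsGeneratorExponent

theorem moveUnit_of_not_tight (hv : IsGeneratorExponent n s v) (hn : 3 ≤ n) (hj : 0 < v j)
    (hjp : j < p) (hp : p.val + 1 < n) (hcycle : ∀ a, CycleNeighbors a p → a ≠ j → v a + v p ≤ s)
    (hstar : ∀ y x : Fin n, y.val + 3 = n → x.val + 2 = n → p = y ∨ p = x → j ≠ y →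
      v y + v x < s) :
    IsGeneratorExponent n s (moveUnit v j p) := by
  have hcycle' (a : Fin n) (ha : CycleNeighbors a p) :
      moveUnit v j p a + moveUnit v j p p ≤ s + 1 := by
    have := hcycle a ha
    have := hv.add_le_of_cycleNeighbors a p ha
    have := ha.ne hn
    grind [moveUnit_apply]
  refine ⟨(degree_moveUnit hj p).trans hv.degree_eq, fun t ht => ?_, fun a b hab => ?_,
    fun y x hy hx => ?_⟩
  · have := hv.apply_last t ht
    have : t ≠ j := by omega
    have : t ≠ p := by omega
    grind [moveUnit_apply]
  · rcases eq_or_ne b p with rfl | hb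
    · exact hcycle' a hab
    rcases eq_or_ne a p with rfl | ha
    · rw [add_comm]
      exact hcycle' b hab.symm
    · have := hv.add_le_of_cycleNeighbors a b hab
      grind [moveUnit_apply]
  · have := hv.add_le_of_not_star y x hy hx
    have := hstar y x hy hx
    have : y ≠ x := by omega
    grind [moveUnit_apply]

/-- The inequalities between `k` and a larger vertex are inherited from `u`, so only smaller
vertices can obstruct the exchange. -/
theorem moveUnit_of_eq_above (hu : IsGeneratorExponent n s u) (hv : IsGeneratorExponent n s v)
    (hn : 3 ≤ n) (hk : v k < u k) (heq : ∀ m, k < m → v m = u m) (hjk : j < k) (hj : 0 < v j)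
    (hcycle : ∀ a < k, CycleNeighbors a k → a ≠ j → v a + v k ≤ s)
    (hstar : ∀ y : Fin n, y.val + 3 = n → k.val + 2 = n → j ≠ y → v y + v k < s) :
    IsGeneratorExponent n s (moveUnit v j k) := by
  have hlast : k.val + 1 < n := by
    by_contra! h
    have := hv.apply_last k (by omega)
    have := hu.apply_last k (by omega)
    omega
  refine hv.moveUnit_of_not_tight hn hj hjk hlast (fun a ha haj => ?_) ?_
  · rcases lt_trichotomy a k with h | rfl | h
    · exact hcycle a h ha haj
    · exact absurd rfl (ha.ne hn)
    · have := hu.add_le_of_cycleNeighbors a k ha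
      have := heq a h
      omega
  · rintro y x hy hx (rfl | rfl) hjy
    · have := hu.add_le_of_not_star k x hy hx
      have := heq x (by omega)
      omega
    · exact hstar y hy hx hjy

theorem exists_moveUnit_of_star_not_tight (hu : IsGeneratorExponent n s u)
    (hv : IsGeneratorExponent n s v) (hn : 3 ≤ n) (hk : v k < u k)
    (heq : ∀ m, k < m → v m = u m)
    (hstar : ∀ y : Fin n, y.val + 3 = n → k.val + 2 = n → v y + v k < s) :
    ∃ j < k, IsGeneratorExponent n s (moveUnit v j k) := by
  by_cases htight : ∃ q < k, CycleNeighbors q k ∧ v q + v k = s + 1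
  · obtain ⟨q, hqk, hq, hqs⟩ := htight
    have hpos : 0 < v q := by
      have := hu.add_le_of_cycleNeighbors q k hq
      omega
    refine ⟨q, hqk, hu.moveUnit_of_eq_above hv hn hk heq hqk hpos (fun a hak ha haq => ?_)
      fun y hy hk _ => hstar y hy hk⟩
    have := hstar q
    have := hstar a
    unfold CycleNeighbors at hq ha
    omega
  · push Not at htight
    obtain ⟨j, hjk, hj⟩ :=
      exists_lt_pos_of_degree_le (hu.degree_eq.trans hv.degree_eq.symm).le hk heq
    refine ⟨j, hjk, hu.moveUnit_of_eq_above hv hn hk heq hjk hj (fun a hak ha _ => ?_)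
      fun y hy hk _ => hstar y hy hk⟩
    have := htight a hak ha
    have := hv.add_le_of_cycleNeighbors a k ha
    omega

/-- No single unit can be moved to `x` here, but comparing the exponents at `z, y, x, t` shows that
`u` exceeds `v` at a further vertex. -/
theorem exists_moveUnit_of_tight (hu : IsGeneratorExponent n s u) (hv : IsGeneratorExponent n s v)
    {y x z t : Fin n} (hz : z.val = 0) (hy : y.val + 3 = n) (hx : x.val + 2 = n)
    (ht : t.val + 1 = n) (hlt : v x < u x) (hyx : v y + v x = s) (hzx : v z + v x = s + 1) :
    ∃ p, z < p ∧ v p < u p ∧ IsGeneratorExponent n s (moveUnit v z p) := by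
  have huyx := hu.add_le_of_not_star y x hy hx
  have huzx := hu.add_le_of_cycleNeighbors z x (.inr (.inr (.inl ⟨hz, hx⟩)))
  have hut := hu.apply_last t ht
  have hvt := hv.apply_last t ht
  have hzy : z ≠ y := by rintro rfl; omega
  have hsum (d : Fin n →₀ ℕ) : ∑ i ∈ {z, y, x, t}, d i = d z + (d y + (d x + d t)) := by
    rw [Finset.sum_insert (by grind), Finset.sum_insert (by grind), Finset.sum_pair (by grind)]
  obtain ⟨p, hp, hvu⟩ := exists_notMem_lt_of_sum_lt (S := {z, y, x, t})
    (hv.degree_eq.trans hu.degree_eq.symm).le (by rw [hsum, hsum]; omega)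
  simp only [Finset.mem_insert, Finset.mem_singleton, Fin.ext_iff, not_or] at hp
  refine ⟨p, Fin.lt_def.mpr (by omega), hvu, hv.moveUnit_of_not_tight (by omega) (by omega)
    (Fin.lt_def.mpr (by omega)) (by omega) (fun a ha haz => ?_) (by omega)⟩
  have hle : ∑ i ∈ {a, p, z, x, t}, v i ≤ v.degree := sum_apply_le_degree v _
  unfold CycleNeighbors at ha
  rw [Finset.sum_insert (by grind), Finset.sum_insert (by grind), Finset.sum_insert (by grind),
    Finset.sum_pair (by grind), hv.degree_eq] at hle
  omega

theorem exists_moveUnit (hu : IsGeneratorExponent n s u) (hv : IsGeneratorExponent n s v)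
    (hn : 3 ≤ n) (hk : v k < u k) (heq : ∀ m, k < m → v m = u m) :
    ∃ j p, j < p ∧ v p < u p ∧ IsGeneratorExponent n s (moveUnit v j p) := by
  by_cases hstar : ∀ y : Fin n, y.val + 3 = n → k.val + 2 = n → v y + v k < s
  · obtain ⟨j, hjk, hj⟩ := hu.exists_moveUnit_of_star_not_tight hv hn hk heq hstar
    exact ⟨j, k, hjk, hk, hj⟩
  push Not at hstar
  obtain ⟨y, hy, hx, hle⟩ := hstar
  have hyk : v y + v k = s := (hv.add_le_of_not_star y k hy hx).antisymm hle
  by_cases hzk : v ⟨0, by omega⟩ + v k = s + 1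
  · obtain ⟨p, hzp, hp, hmove⟩ := hu.exists_moveUnit_of_tight hv (z := ⟨0, by omega⟩)
      (t := ⟨n - 1, by omega⟩) rfl hy hx (by grind) hk hyk hzk
    exact ⟨_, p, hzp, hp, hmove⟩
  · have hypos : 0 < v y := by
      have := hu.add_le_of_not_star y k hy hx
      omega
    have hyk' : y < k := by omega
    refine ⟨y, k, hyk', hk, hu.moveUnit_of_eq_above hv hn hk heq hyk' hypos
      (fun a hak ha hay => ?_) fun y' hy' _ hne => absurd (Fin.ext (by omega)) hne⟩
    have haz : a = ⟨0, by omega⟩ := by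
      unfold CycleNeighbors at ha
      grind
    have := hv.add_le_of_cycleNeighbors a k ha
    grind

end IsGeneratorExponent

theorem lexExchange_setOf_isGeneratorExponent (hn : 3 ≤ n) (s : ℕ) :
    LexExchange {d | IsGeneratorExponent n s d} :=
  fun _ hu _ hv ⟨_, hk, heq⟩ => hu.exists_moveUnit hv hn hk heq

end Exchange

theorem IG2IF_lex_linear_quotients_general (K : Type*) [Field K] (n s : ℕ) (hn : 3 ≤ n) :
    ∃ L : List (Fin n →₀ ℕ),
      LexDecMinGenOrder (edgeIdeal K (anticycleIn n (n - 1)) ^ s * edgeIdeal K (starF n)) L ∧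
      IsLinQuotOrder K L := by
  rw [edgeIdeal_eq_monomialIdeal, edgeIdeal_eq_monomialIdeal, monomialIdeal_pow_mul,
    powMulExponents_eq_setOf_isGeneratorExponent hn]
  exact (lexExchange_setOf_isGeneratorExponent hn s).exists_lexDecMinGenOrder K
    fun _ hd => hd.degree_eq

/-- Lemma `lem3`: for `n ≥ 6`, `G = A_{n-1}` the anticycle on `[n-1]` and `F` the star
on `[n]` with edges `{i, n}`, `1 ≤ i ≤ n-3`, the product `I_G^2 · I_F` has linear
quotients via the ordering of its minimal generators in decreasing lexicographic order
induced by `x_n > x_{n-1} > … > x_1`. -/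
theorem IG2IF_lex_linear_quotients
    (K : Type*) [Field K] (n : ℕ) (hn : 6 ≤ n) :
    ∃ L : List (Fin n →₀ ℕ),
      LexDecMinGenOrder (edgeIdeal K (anticycleIn n (n - 1)) ^ 2 * edgeIdeal K (starF n)) L ∧
      IsLinQuotOrder K L :=
  IG2IF_lex_linear_quotients_general K n 2 (by omega)

end
end

section
/- Let G_0 be a graph on [n−1], let F_0 be a star graph on [n] with center n, let s ≥ 2, and let H_0 be the graph on [n] with edge set E(G_0) ∪ E(F_0). Then the set of minimal monomial generators of I_{H_0}^s equals the union over all pairs of integers i, j ≥ 0 with i + j = s of the sets of minimal monomial generators of the ideals I_{G_0}^i · I_{F_0}^j; in particular I_{H_0}^s = Σ_{i+j=s, i,j ≥ 0} I_{G_0}^i I_{F_0}^j. -/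
open MvPolynomial

noncomputable section

/-!
All generators of `I_G` and `I_F` are quadratic, so each `I_G ^ i * I_F ^ j` with `i + j = s` is
generated by monomials of degree `2 * s`, and so is their sum `(I_G + I_F) ^ s`. In a monomial ideal
generated in a single degree `k` the minimal generators are exactly its monomials of degree `k`, and
a monomial lies in a sum of monomial ideals only if it lies in one of the summands.
-/

theorem add_pow_eq_sum_antidiagonal {α : Type*} [IdemSemiring α] {a b : α} (h : Commute a b)
    (s : ℕ) :
    (a + b) ^ s = ∑ p ∈ Finset.HasAntidiagonal.antidiagonal s, a ^ p.1 * b ^ p.2 := by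
  rw [h.add_pow']
  refine Finset.sum_congr rfl fun p hp => nsmul_eq_self ?_ _
  exact (Nat.choose_pos (Finset.HasAntidiagonal.antidiagonal.fst_le hp)).ne'

theorem finsupp_eq_of_le_of_degree_eq {σ M : Type*} [AddCommMonoid M] [PartialOrder M]
    [CanonicallyOrderedAdd M] [IsLeftCancelAdd M] [Sub M] [OrderedSub M] {d e : σ →₀ M}
    (hle : d ≤ e) (hdeg : d.degree = e.degree) : d = e := by
  obtain ⟨c, rfl⟩ := exists_add_of_le hle
  have hc : c = 0 := by simpa only [map_add, left_eq_add, Finsupp.degree_eq_zero_iff] using hdeg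
  rw [hc, add_zero]

section Equigenerated

variable {σ R : Type*} [CommSemiring R]

theorem monomial_one_mem_span_monomial_image_iff [Nontrivial R] {S : Set (σ →₀ ℕ)} {d : σ →₀ ℕ} :
    monomial d (1 : R) ∈ Ideal.span ((fun e => monomial e (1 : R)) '' S) ↔ ∃ e ∈ S, e ≤ d := by
  classical
  simp only [mem_ideal_span_monomial_image, support_monomial, one_ne_zero, if_false,
    Finset.mem_singleton, forall_eq]

theorem monomial_one_mem_iSup_span_monomial_image_iff [Nontrivial R] {ι : Sort*}
    {S : ι → Set (σ →₀ ℕ)} {d : σ →₀ ℕ} :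
    monomial d (1 : R) ∈ ⨆ i, Ideal.span ((fun e => monomial e (1 : R)) '' S i) ↔
      ∃ i, monomial d (1 : R) ∈ Ideal.span ((fun e => monomial e (1 : R)) '' S i) := by
  simp only [← Ideal.span_iUnion, ← Set.image_iUnion, monomial_one_mem_span_monomial_image_iff,
    Set.mem_iUnion]
  exact ⟨fun ⟨e, ⟨i, he⟩, hed⟩ => ⟨i, e, he, hed⟩, fun ⟨i, e, he, hed⟩ => ⟨e, ⟨i, he⟩, hed⟩⟩

/-- `I` is an equigenerated monomial ideal: it is generated by monomials that all have degree `k`.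
The generating set may be empty, so the zero ideal is equigenerated in every degree. -/
def IsEquigenerated (I : Ideal (MvPolynomial σ R)) (k : ℕ) : Prop :=
  ∃ S : Set (σ →₀ ℕ), (∀ d ∈ S, d.degree = k) ∧
    I = Ideal.span ((fun d => monomial d (1 : R)) '' S)

namespace IsEquigenerated

variable {I J : Ideal (MvPolynomial σ R)} {k l : ℕ}

theorem one : IsEquigenerated (1 : Ideal (MvPolynomial σ R)) 0 :=
  ⟨{0}, by simp, by simp [Ideal.one_eq_top]⟩

theorem mul (hI : IsEquigenerated I k) (hJ : IsEquigenerated J l) :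
    IsEquigenerated (I * J) (k + l) := by
  obtain ⟨S, hS, rfl⟩ := hI
  obtain ⟨T, hT, rfl⟩ := hJ
  refine ⟨Set.image2 (· + ·) S T, ?_, ?_⟩
  · rintro _ ⟨d, hd, e, he, rfl⟩
    rw [map_add, hS d hd, hT e he]
  · rw [Ideal.span_mul_span', ← Set.image2_mul, Set.image2_image_left, Set.image2_image_right,
      Set.image_image2]
    simp only [monomial_mul, one_mul]

theorem pow (hI : IsEquigenerated I k) (m : ℕ) : IsEquigenerated (I ^ m) (m * k) := by
  induction m with
  | zero => simpa only [pow_zero, zero_mul] using one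
  | succ m ih => simpa only [pow_succ, Nat.succ_mul] using ih.mul hI

theorem iSup {ι : Sort*} {I : ι → Ideal (MvPolynomial σ R)}
    (hI : ∀ i, IsEquigenerated (I i) k) : IsEquigenerated (⨆ i, I i) k := by
  choose S hS hIS using hI
  refine ⟨⋃ i, S i, ?_, ?_⟩
  · simpa only [Set.mem_iUnion, forall_exists_index] using fun d i => hS i d
  · simp only [hIS, Set.image_iUnion, Ideal.span_iUnion]

theorem monomial_one_mem_iSup_iff [Nontrivial R] {ι : Sort*} {I : ι → Ideal (MvPolynomial σ R)}
    {k : ι → ℕ} (hI : ∀ i, IsEquigenerated (I i) (k i)) {d : σ →₀ ℕ} :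
    monomial d (1 : R) ∈ ⨆ i, I i ↔ ∃ i, monomial d (1 : R) ∈ I i := by
  choose S _ hIS using hI
  simp only [hIS, monomial_one_mem_iSup_span_monomial_image_iff]

end IsEquigenerated

end Equigenerated

section MinimalGenerators

variable {K : Type*} [Field K] {n k : ℕ}

theorem IsEquigenerated.isMinGen_iff {I : Ideal (MvPolynomial (Fin n) K)}
    (hI : IsEquigenerated I k) {d : Fin n →₀ ℕ} :
    IsMinGen I d ↔ monomial d (1 : K) ∈ I ∧ d.degree = k := by
  obtain ⟨S, hS, rfl⟩ := hI
  simp only [IsMinGen, monomial_one_mem_span_monomial_image_iff]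
  refine and_congr_right fun ⟨f, hf, hfd⟩ => ⟨fun hmin => ?_, ?_⟩
  · by_contra hdeg
    exact hmin f hfd (fun h => hdeg (h ▸ hS f hf)) ⟨f, hf, le_rfl⟩
  · rintro hdeg e hed hne ⟨g, hg, hge⟩
    have hgd : g = d := finsupp_eq_of_le_of_degree_eq (hge.trans hed) ((hS g hg).trans hdeg.symm)
    exact hne (hed.antisymm (hgd ▸ hge))

theorem isMinGen_iSup_iff {ι : Sort*} {I : ι → Ideal (MvPolynomial (Fin n) K)}
    (hI : ∀ i, IsEquigenerated (I i) k) {d : Fin n →₀ ℕ} :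
    IsMinGen (⨆ i, I i) d ↔ ∃ i, IsMinGen (I i) d := by
  simp only [(IsEquigenerated.iSup hI).isMinGen_iff, (hI _).isMinGen_iff,
    IsEquigenerated.monomial_one_mem_iSup_iff hI, exists_and_right]

theorem isMinGen_sum_iff {ι : Type*} {t : Finset ι} {I : ι → Ideal (MvPolynomial (Fin n) K)}
    (hI : ∀ i ∈ t, IsEquigenerated (I i) k) {d : Fin n →₀ ℕ} :
    IsMinGen (∑ i ∈ t, I i) d ↔ ∃ i ∈ t, IsMinGen (I i) d := by
  rw [Ideal.sum_eq_sup, Finset.sup_eq_iSup, iSup_subtype',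
    isMinGen_iSup_iff (fun i : {i // i ∈ t} => hI i.1 i.2), Subtype.exists]
  simp only [exists_prop]

theorem isMinGen_add_pow_iff {I J : Ideal (MvPolynomial (Fin n) K)} (hI : IsEquigenerated I k)
    (hJ : IsEquigenerated J k) {s : ℕ} {d : Fin n →₀ ℕ} :
    IsMinGen ((I + J) ^ s) d ↔ ∃ i j : ℕ, i + j = s ∧ IsMinGen (I ^ i * J ^ j) d := by
  have hdeg : ∀ p ∈ Finset.HasAntidiagonal.antidiagonal s,
      IsEquigenerated (I ^ p.1 * J ^ p.2) (s * k) := by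
    intro p hp
    rw [← Finset.HasAntidiagonal.mem_antidiagonal.mp hp, add_mul]
    exact (hI.pow p.1).mul (hJ.pow p.2)
  rw [add_pow_eq_sum_antidiagonal (Commute.all I J), isMinGen_sum_iff hdeg]
  simp only [Prod.exists, Finset.HasAntidiagonal.mem_antidiagonal]

end MinimalGenerators

section EdgeIdeal

variable (K : Type*) [Field K] {n : ℕ}

theorem isEquigenerated_edgeIdeal (G : SimpleGraph (Fin n)) :
    IsEquigenerated (edgeIdeal K G) 2 := by
  refine ⟨{d | ∃ i j, G.Adj i j ∧ d = Finsupp.single i 1 + Finsupp.single j 1}, ?_, ?_⟩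
  · rintro _ ⟨i, j, -, rfl⟩
    simp only [map_add, Finsupp.degree_single]
  · have hX (i j : Fin n) : monomial (Finsupp.single i 1 + Finsupp.single j 1) (1 : K) =
        X i * X j := by
      simp only [X, monomial_mul, one_mul]
    rw [edgeIdeal]
    congr 1
    ext p
    simp only [Set.mem_image, Set.mem_ofPred_eq]
    constructor
    · rintro ⟨i, j, hij, rfl⟩
      exact ⟨_, ⟨i, j, hij, rfl⟩, hX i j⟩
    · rintro ⟨_, ⟨i, j, hij, rfl⟩, rfl⟩
      exact ⟨i, j, hij, hX i j⟩

theorem edgeIdeal_sup (G F : SimpleGraph (Fin n)) :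
    edgeIdeal K (G ⊔ F) = edgeIdeal K G + edgeIdeal K F := by
  simp only [edgeIdeal, Submodule.add_eq_sup, ← Ideal.span_union]
  congr 1
  ext p
  simp only [SimpleGraph.sup_adj, or_and_right, exists_or, Set.mem_union, Set.mem_ofPred_eq]

end EdgeIdeal

theorem min_gens_of_power_union_general (K : Type*) [Field K] {n : ℕ} (s : ℕ)
    (G F : SimpleGraph (Fin n)) :
    (∀ d : Fin n →₀ ℕ,
      IsMinGen (edgeIdeal K (G ⊔ F) ^ s) d ↔
        ∃ i j : ℕ, i + j = s ∧ IsMinGen (edgeIdeal K G ^ i * edgeIdeal K F ^ j) d) ∧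
    edgeIdeal K (G ⊔ F) ^ s =
      ∑ p ∈ Finset.HasAntidiagonal.antidiagonal s, edgeIdeal K G ^ p.1 * edgeIdeal K F ^ p.2 := by
  rw [edgeIdeal_sup]
  exact ⟨fun _ => isMinGen_add_pow_iff (isEquigenerated_edgeIdeal K G)
    (isEquigenerated_edgeIdeal K F), add_pow_eq_sum_antidiagonal (Commute.all _ _) s⟩

/-- For `G₀` a graph on `[n-1]`, `F₀` a star on `[n]` with center `n`, `s ≥ 2`, and
`H₀` the graph with `E(H₀) = E(G₀) ∪ E(F₀)`: the minimal monomial generators of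
`I_{H₀}^s` are exactly the union of the minimal monomial generators of the ideals
`I_{G₀}^i I_{F₀}^j` with `i + j = s`, and `I_{H₀}^s = Σ_{i+j=s} I_{G₀}^i I_{F₀}^j`. -/
theorem min_gens_of_power_union
    (K : Type*) [Field K] (n : ℕ) (hn : 1 ≤ n) (s : ℕ) (hs : 2 ≤ s)
    (G0 F0 : SimpleGraph (Fin n))
    -- `G0` is a graph on `[n-1]` : no edge of `G0` touches the vertex `n`
    (hG0 : ∀ i j : Fin n, G0.Adj i j → i.val < n - 1 ∧ j.val < n - 1)
    -- `F0` is a star on `[n]` with center `n` : every edge of `F0` contains the vertex `n`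
    (hF0 : ∀ i j : Fin n, F0.Adj i j → i.val = n - 1 ∨ j.val = n - 1) :
    (∀ d : Fin n →₀ ℕ,
      IsMinGen (edgeIdeal K (G0 ⊔ F0) ^ s) d ↔
        ∃ i j : ℕ, i + j = s ∧ IsMinGen (edgeIdeal K G0 ^ i * edgeIdeal K F0 ^ j) d) ∧
    edgeIdeal K (G0 ⊔ F0) ^ s =
      ∑ p ∈ Finset.HasAntidiagonal.antidiagonal s, edgeIdeal K G0 ^ p.1 * edgeIdeal K F0 ^ p.2 :=
  min_gens_of_power_union_general K s G0 F0

end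
end
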